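/- Let M = ℝ² with coordinates (x¹, x²) and the C^∞-bilinear multiplication on vector fields determined by ∂/∂x¹ ∘ ∂/∂x^i = ∂/∂x^i (i = 1,2) and ∂/∂x² ∘ ∂/∂x² = 0. Then: (a) this multiplication, with identity e = ∂/∂x¹, defines an F-manifold structure on ℝ²; and (b) a vector field E = f₁ ∂/∂x¹ + f₂ ∂/∂x² is an eventual identity if and only if f₁ is nowhere vanishing and depends only on x¹ (∂f₁/∂x² = 0), with f₂ an arbitrary smooth function. -/

import Mathlib

/-! The F-manifold structure on `ℝ²` given in coordinates `(x¹, x²)` by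
`∂₁ ∘ ∂ᵢ = ∂ᵢ`, `∂₂ ∘ ∂₂ = 0` (Hertling's non-semi-simple example), and the
characterization of its eventual identities.  Vector fields on `ℝ²` are identified
with smooth maps `ℝ² → ℝ²`, the Lie bracket being `[X,Y] = DY·X − DX·Y`. -/

/-- Vector fields on `ℝ²`, identified with maps `ℝ² → ℝ²`. -/
abbrev VF2 := (ℝ × ℝ) → ℝ × ℝ

/-- The Lie bracket of vector fields on `ℝ²`: `[X,Y] = DY·X − DX·Y`. -/
noncomputable def bracket2 (X Y : VF2) : VF2 :=
  fun x => fderiv ℝ Y x (X x) - fderiv ℝ X x (Y x)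

/-- The Lie derivative `(L_X ∘)(Y,Z) := [X, Y∘Z] − [X,Y]∘Z − Y∘[X,Z]` of a
multiplication `∘ = mul` of vector fields on `ℝ²`, along the vector field `X`. -/
noncomputable def lieDerivOfMul2 (mul : VF2 → VF2 → VF2) (X Y Z : VF2) : VF2 :=
  bracket2 X (mul Y Z) - mul (bracket2 X Y) Z - mul Y (bracket2 X Z)

/-- `(mul, e)` is an F-manifold structure on `ℝ²`: a commutative, associative,
`C^∞`-bilinear multiplication on (smooth) vector fields with identity vector field `e`,
satisfying the Hertling–Manin condition. -/
def IsFManifoldMul2 (mul : VF2 → VF2 → VF2) (e : VF2) : Prop :=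
  (∀ X Y, ContDiff ℝ (⊤ : ℕ∞) X → ContDiff ℝ (⊤ : ℕ∞) Y → ContDiff ℝ (⊤ : ℕ∞) (mul X Y)) ∧
  (∀ X Y, mul X Y = mul Y X) ∧
  (∀ X Y Z, mul (mul X Y) Z = mul X (mul Y Z)) ∧
  (∀ X X' Y, mul (X + X') Y = mul X Y + mul X' Y) ∧
  (∀ (φ : ℝ × ℝ → ℝ) (X Y : VF2),
    mul (fun x => φ x • X x) Y = fun x => φ x • mul X Y x) ∧
  (∀ X, mul e X = X) ∧
  (∀ X Y Z W, ContDiff ℝ (⊤ : ℕ∞) X → ContDiff ℝ (⊤ : ℕ∞) Y → ContDiff ℝ (⊤ : ℕ∞) Z → ContDiff ℝ (⊤ : ℕ∞) W →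
    lieDerivOfMul2 mul (mul X Y) Z W =
      mul X (lieDerivOfMul2 mul Y Z W) + mul Y (lieDerivOfMul2 mul X Z W))

/-- A smooth vector field `Ev` on `ℝ²` is an eventual identity for `(ℝ², mul, e)` if it
is invertible (there is a smooth `inv` with `Ev ∘ inv = e`) and `X*Y := X∘Y∘inv`
defines a new F-manifold structure on `ℝ²`, with identity field `Ev`. -/
def IsEventualIdentity2 (mul : VF2 → VF2 → VF2) (e Ev : VF2) : Prop :=
  ∃ inv : VF2, ContDiff ℝ (⊤ : ℕ∞) inv ∧ mul Ev inv = e ∧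
    IsFManifoldMul2 (fun X Y => mul (mul X Y) inv) Ev

/-- The multiplication determined by `∂/∂x¹ ∘ ∂/∂xⁱ = ∂/∂xⁱ` (`i = 1,2`) and
`∂/∂x² ∘ ∂/∂x² = 0`, extended `C^∞`-bilinearly. -/
def hMul : VF2 → VF2 → VF2 :=
  fun X Y x => ((X x).1 * (Y x).1, (X x).1 * (Y x).2 + (X x).2 * (Y x).1)

/-- The identity vector field `e = ∂/∂x¹`. -/
def hE : VF2 := fun _ => (1, 0)

/-! Write `⋆` for the multiplication, `∇` for the flat connection of `ℝ²` and
`X * Y = X ⋆ Y ⋆ g`. Since `⋆` is `∇`-parallel, all derivatives of `X, Y, Z, W` cancel in the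
Hertling–Manin identity for `*`, and what is left is the symmetry
`Z ⋆ W ⋆ δ(X, Y) = X ⋆ Y ⋆ δ(Z, W)` of
`δ(X, Y) = ∇_{X * Y} g - X ⋆ g ⋆ ∇_Y g - Y ⋆ g ⋆ ∇_X g`.
For `X = Y = ∂₂` and `Z = W = e` it says that `g₁ ∂₂g₁ = 0`. Conversely, `∂₂g₁ = 0` gives
`δ(X, Y) = X ⋆ Y ⋆ δ(e, e)`, which makes the symmetry obvious. Finally, the inverse `g` of `E` has
`g₁ = 1 / E₁`, so `∂₂g₁ = 0` if and only if `∂₂E₁ = 0`. -/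

local infixl:70 " ⋆ " => hMul

/-- The coordinate vector field `∂/∂x²`. -/
def hD₂ : VF2 := fun _ => (0, 1)

section Algebra

variable (X Y Z : VF2) {E g : VF2} (x : ℝ × ℝ)

lemma fst_hMul_apply : ((X ⋆ Y) x).1 = (X x).1 * (Y x).1 := rfl

lemma snd_hMul_apply : ((X ⋆ Y) x).2 = (X x).1 * (Y x).2 + (X x).2 * (Y x).1 := rfl

lemma hMul_comm : X ⋆ Y = Y ⋆ X := by
  ext x <;> simp only [fst_hMul_apply, snd_hMul_apply] <;> ring

lemma hMul_assoc : X ⋆ Y ⋆ Z = X ⋆ (Y ⋆ Z) := by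
  ext x <;> simp only [fst_hMul_apply, snd_hMul_apply] <;> ring

lemma add_hMul : (X + Y) ⋆ Z = X ⋆ Z + Y ⋆ Z := by
  ext x <;>
    simp only [fst_hMul_apply, snd_hMul_apply, Pi.add_apply, Prod.fst_add, Prod.snd_add] <;> ring

lemma smul_hMul (φ : ℝ × ℝ → ℝ) : (φ • X) ⋆ Y = φ • (X ⋆ Y) := by
  ext x <;>
    simp only [fst_hMul_apply, snd_hMul_apply, Pi.smul_apply', Prod.smul_fst, Prod.smul_snd,
      smul_eq_mul] <;> ring

lemma hE_hMul : hE ⋆ X = X := by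
  ext x <;> simp [fst_hMul_apply, snd_hMul_apply, hE]

lemma hMul_hE : X ⋆ hE = X := by
  rw [hMul_comm, hE_hMul]

lemma fst_mul_fst_of_hMul_eq_hE (h : E ⋆ g = hE) : (E x).1 * (g x).1 = 1 :=
  congrArg Prod.fst (congrFun h x)

/-- The pointwise inverse for `hMul`: identifying `(a, b)` with the dual number `a + bε`, this is
`(a + bε)⁻¹ = a⁻¹ - a⁻²bε`. It is an inverse only where `a ≠ 0`. -/
noncomputable def hInv (X : VF2) : VF2 :=
  fun x => ((X x).1⁻¹, -(X x).2 * ((X x).1⁻¹ * (X x).1⁻¹))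

lemma hMul_hInv (h : ∀ x, (E x).1 ≠ 0) : E ⋆ hInv E = hE := by
  ext x <;> simp only [fst_hMul_apply, snd_hMul_apply, hInv, hE] <;> field_simp [h x]
  ring

end Algebra

section FDeriv

variable {𝕜 V : Type*} [NontriviallyNormedField 𝕜] [NormedAddCommGroup V] [NormedSpace 𝕜 V]

lemma fderiv_fst_apply {F G : Type*} [NormedAddCommGroup F] [NormedSpace 𝕜 F]
    [NormedAddCommGroup G] [NormedSpace 𝕜 G] {f : V → F × G} {x : V}
    (hf : DifferentiableAt 𝕜 f x) (v : V) :
    fderiv 𝕜 (fun y => (f y).1) x v = (fderiv 𝕜 f x v).1 := by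
  rw [fderiv.fst hf]
  rfl

lemma fderiv_apply_eq_zero_iff_of_mul_eq_one {f g : V → 𝕜} {x : V}
    (hf : DifferentiableAt 𝕜 f x) (hg : DifferentiableAt 𝕜 g x) (h : ∀ y, f y * g y = 1) (v : V) :
    fderiv 𝕜 f x v = 0 ↔ fderiv 𝕜 g x v = 0 := by
  have hfx : f x ≠ 0 := left_ne_zero_of_mul_eq_one (h x)
  have hgx : g x ≠ 0 := right_ne_zero_of_mul_eq_one (h x)
  have leibniz : f x * fderiv 𝕜 g x v + g x * fderiv 𝕜 f x v = 0 := by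
    have hfg : f * g = fun _ => 1 := funext h
    simpa [hfg] using (DFunLike.congr_fun (fderiv_mul hf hg) v).symm
  constructor <;> intro hv <;> simpa [hv, hfx, hgx] using leibniz

end FDeriv

section Calculus

variable {X Y : VF2}

lemma contDiff_hMul {n : WithTop ℕ∞} (hX : ContDiff ℝ n X) (hY : ContDiff ℝ n Y) :
    ContDiff ℝ n (X ⋆ Y) :=
  (hX.fst.mul hY.fst).prodMk ((hX.fst.mul hY.snd).add (hX.snd.mul hY.fst))

lemma contDiff_hInv {n : WithTop ℕ∞} (hX : ContDiff ℝ n X) (h : ∀ x, (X x).1 ≠ 0) :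
    ContDiff ℝ n (hInv X) :=
  have hinv := hX.fst.inv h
  hinv.prodMk (hX.snd.neg.mul (hinv.mul hinv))

lemma differentiable_hMul (hX : Differentiable ℝ X) (hY : Differentiable ℝ Y) :
    Differentiable ℝ (X ⋆ Y) :=
  (hX.fst.mul hY.fst).prodMk ((hX.fst.mul hY.snd).add (hX.snd.mul hY.fst))

/-- The covariant derivative `∇_X Y` for the flat connection of `ℝ²`. -/
noncomputable def covDeriv2 (X Y : VF2) : VF2 :=
  fun x => fderiv ℝ Y x (X x)

lemma bracket2_eq_covDeriv2_sub (X Y : VF2) : bracket2 X Y = covDeriv2 X Y - covDeriv2 Y X := rfl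

lemma covDeriv2_apply (X Y : VF2) (x : ℝ × ℝ) :
    covDeriv2 X Y x =
      (X x).1 • fderiv ℝ Y x (1, 0) + (X x).2 • fderiv ℝ Y x (0, 1) := by
  rw [covDeriv2, ← map_smul, ← map_smul, ← map_add]
  simp

lemma covDeriv2_hMul (Z : VF2) (hX : Differentiable ℝ X) (hY : Differentiable ℝ Y) :
    covDeriv2 Z (X ⋆ Y) = covDeriv2 Z X ⋆ Y + X ⋆ covDeriv2 Z Y := by
  funext x
  have hX₁ := (hX x).hasFDerivAt.fst
  have hX₂ := (hX x).hasFDerivAt.snd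
  have hY₁ := (hY x).hasFDerivAt.fst
  have hY₂ := (hY x).hasFDerivAt.snd
  have hXY : HasFDerivAt (X ⋆ Y) _ x := (hX₁.mul hY₁).prodMk ((hX₁.mul hY₂).add (hX₂.mul hY₁))
  rw [covDeriv2, hXY.fderiv]
  ext <;>
    simp only [ContinuousLinearMap.prod_apply, add_apply, smul_apply,
      ContinuousLinearMap.comp_apply, ContinuousLinearMap.coe_fst', ContinuousLinearMap.coe_snd',
      smul_eq_mul, Pi.add_apply, Prod.fst_add, Prod.snd_add, fst_hMul_apply, snd_hMul_apply,
      covDeriv2] <;> ring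

end Calculus

/-- The multiplication `X * Y` obtained by twisting `hMul` with `g`; for `g = E⁻¹` it is the one
in the definition of an eventual identity. -/
def twistMul (g X Y : VF2) : VF2 := X ⋆ Y ⋆ g

/-- The vector field `δ(X, Y)` in terms of which the Hertling–Manin identity for `twistMul g` is
the symmetry `Z ⋆ W ⋆ δ(X, Y) = X ⋆ Y ⋆ δ(Z, W)`. -/
noncomputable def twistDefect (g X Y : VF2) : VF2 :=
  covDeriv2 (twistMul g X Y) g - X ⋆ g ⋆ covDeriv2 Y g - Y ⋆ g ⋆ covDeriv2 X g

section Twist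

variable {g X Y Z W : VF2}

lemma twistMul_comm (g X Y : VF2) : twistMul g X Y = twistMul g Y X := by
  rw [twistMul, hMul_comm X, twistMul]

lemma twistMul_assoc (g X Y Z : VF2) :
    twistMul g (twistMul g X Y) Z = twistMul g X (twistMul g Y Z) := by
  simp only [twistMul, hMul_assoc, hMul_comm g]

lemma add_twistMul (g X Y Z : VF2) :
    twistMul g (X + Y) Z = twistMul g X Z + twistMul g Y Z := by
  simp only [twistMul, add_hMul]

lemma smul_twistMul (φ : ℝ × ℝ → ℝ) (g X Y : VF2) :
    twistMul g (φ • X) Y = φ • twistMul g X Y := by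
  simp only [twistMul, smul_hMul]

lemma twistMul_left_identity {E : VF2} (hEg : E ⋆ g = hE) (X : VF2) : twistMul g E X = X := by
  rw [twistMul, hMul_comm E, hMul_assoc, hEg, hMul_hE]

lemma contDiff_twistMul {n : WithTop ℕ∞} (hg : ContDiff ℝ n g) (hX : ContDiff ℝ n X)
    (hY : ContDiff ℝ n Y) : ContDiff ℝ n (twistMul g X Y) :=
  contDiff_hMul (contDiff_hMul hX hY) hg

lemma covDeriv2_twistMul (Z : VF2) (hg : Differentiable ℝ g) (hX : Differentiable ℝ X)
    (hY : Differentiable ℝ Y) :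
    covDeriv2 Z (twistMul g X Y) =
      twistMul g (covDeriv2 Z X) Y + twistMul g X (covDeriv2 Z Y) + X ⋆ Y ⋆ covDeriv2 Z g := by
  simp only [twistMul, covDeriv2_hMul Z (differentiable_hMul hX hY) hg, covDeriv2_hMul Z hX hY,
    add_hMul]

lemma lieDerivOfMul2_twistMul (X : VF2) (hg : Differentiable ℝ g) (hY : Differentiable ℝ Y)
    (hZ : Differentiable ℝ Z) :
    lieDerivOfMul2 (twistMul g) X Y Z =
      Y ⋆ Z ⋆ covDeriv2 X g + twistMul g (covDeriv2 Y X) Z + twistMul g Y (covDeriv2 Z X) -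
        covDeriv2 (twistMul g Y Z) X := by
  rw [lieDerivOfMul2, bracket2_eq_covDeriv2_sub, bracket2_eq_covDeriv2_sub,
    bracket2_eq_covDeriv2_sub, covDeriv2_twistMul X hg hY hZ]
  ext x <;>
    simp only [twistMul, fst_hMul_apply, snd_hMul_apply, Pi.add_apply, Pi.sub_apply, Prod.fst_add,
      Prod.snd_add, Prod.fst_sub, Prod.snd_sub] <;> ring

lemma hertlingManin_twistMul_sub (hg : Differentiable ℝ g) (hX : Differentiable ℝ X)
    (hY : Differentiable ℝ Y) (hZ : Differentiable ℝ Z) (hW : Differentiable ℝ W) :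
    lieDerivOfMul2 (twistMul g) (twistMul g X Y) Z W -
        (twistMul g X (lieDerivOfMul2 (twistMul g) Y Z W) +
          twistMul g Y (lieDerivOfMul2 (twistMul g) X Z W)) =
      Z ⋆ W ⋆ twistDefect g X Y - X ⋆ Y ⋆ twistDefect g Z W := by
  simp only [lieDerivOfMul2_twistMul _ hg hZ hW, covDeriv2_twistMul _ hg hX hY, twistDefect]
  ext x <;>
    simp only [twistMul, fst_hMul_apply, snd_hMul_apply, Pi.add_apply, Pi.sub_apply, Prod.fst_add,
      Prod.snd_add, Prod.fst_sub, Prod.snd_sub] <;> ring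

lemma hertlingManin_twistMul_iff (hg : Differentiable ℝ g) (hX : Differentiable ℝ X)
    (hY : Differentiable ℝ Y) (hZ : Differentiable ℝ Z) (hW : Differentiable ℝ W) :
    lieDerivOfMul2 (twistMul g) (twistMul g X Y) Z W =
        twistMul g X (lieDerivOfMul2 (twistMul g) Y Z W) +
          twistMul g Y (lieDerivOfMul2 (twistMul g) X Z W) ↔
      Z ⋆ W ⋆ twistDefect g X Y = X ⋆ Y ⋆ twistDefect g Z W := by
  rw [← sub_eq_zero, hertlingManin_twistMul_sub hg hX hY hZ hW, sub_eq_zero]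

lemma twistDefect_eq_hMul (hg : ∀ x, (fderiv ℝ g x (0, 1)).1 = 0) (X Y : VF2) :
    twistDefect g X Y = X ⋆ Y ⋆ twistDefect g hE hE := by
  ext x <;>
    simp only [twistDefect, twistMul, hE, covDeriv2_apply, fst_hMul_apply, snd_hMul_apply,
      Pi.sub_apply, Prod.fst_add, Prod.snd_add, Prod.fst_sub, Prod.snd_sub, Prod.smul_fst,
      Prod.smul_snd, smul_eq_mul, hg x] <;> ring

lemma twistDefect_symm (hg : ∀ x, (fderiv ℝ g x (0, 1)).1 = 0) (X Y Z W : VF2) :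
    Z ⋆ W ⋆ twistDefect g X Y = X ⋆ Y ⋆ twistDefect g Z W := by
  rw [twistDefect_eq_hMul hg X Y, twistDefect_eq_hMul hg Z W, ← hMul_assoc (Z ⋆ W),
    ← hMul_assoc (X ⋆ Y), hMul_comm (Z ⋆ W)]

lemma fst_mul_fst_fderiv_eq_zero (x : ℝ × ℝ)
    (h : hE ⋆ hE ⋆ twistDefect g hD₂ hD₂ = hD₂ ⋆ hD₂ ⋆ twistDefect g hE hE) :
    (g x).1 * (fderiv ℝ g x (0, 1)).1 = 0 := by
  have h₂ := congrArg Prod.snd (congrFun h x)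
  simp only [hE_hMul, hD₂, twistDefect, twistMul, covDeriv2_apply, fst_hMul_apply, snd_hMul_apply,
    Pi.sub_apply, Prod.fst_add, Prod.snd_add, Prod.fst_sub, Prod.snd_sub, Prod.smul_fst,
    Prod.smul_snd, smul_eq_mul] at h₂
  -- `h₂` says that `-2 g₁ ∂₂g₁ = 0`.
  linear_combination (-1 / 2) * h₂

end Twist

section EventualIdentity

variable {E g : VF2}

lemma isFManifoldMul2_twistMul (hg : ContDiff ℝ (⊤ : ℕ∞) g) (hEg : E ⋆ g = hE)
    (hg₁ : ∀ x, (fderiv ℝ g x (0, 1)).1 = 0) : IsFManifoldMul2 (twistMul g) E := by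
  have diff {X : VF2} (hX : ContDiff ℝ (⊤ : ℕ∞) X) : Differentiable ℝ X :=
    hX.differentiable (by simp)
  refine ⟨fun X Y => contDiff_twistMul hg, twistMul_comm g, twistMul_assoc g, add_twistMul g,
    fun φ => smul_twistMul φ g, twistMul_left_identity hEg, fun X Y Z W hX hY hZ hW => ?_⟩
  exact (hertlingManin_twistMul_iff (diff hg) (diff hX) (diff hY) (diff hZ) (diff hW)).2
    (twistDefect_symm hg₁ X Y Z W)

lemma fst_fderiv_eq_zero_of_isFManifoldMul2 (hg : Differentiable ℝ g) (hEg : E ⋆ g = hE)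
    (hF : IsFManifoldMul2 (twistMul g) E) (x : ℝ × ℝ) : (fderiv ℝ g x (0, 1)).1 = 0 := by
  obtain ⟨-, -, -, -, -, -, hertlingManin⟩ := hF
  have symm : hE ⋆ hE ⋆ twistDefect g hD₂ hD₂ = hD₂ ⋆ hD₂ ⋆ twistDefect g hE hE :=
    (hertlingManin_twistMul_iff hg (differentiable_const _) (differentiable_const _)
      (differentiable_const _) (differentiable_const _)).1
      (hertlingManin hD₂ hD₂ hE hE contDiff_const contDiff_const contDiff_const contDiff_const)
  have hgx : (g x).1 ≠ 0 := right_ne_zero_of_mul_eq_one (fst_mul_fst_of_hMul_eq_hE x hEg)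
  exact (mul_eq_zero.1 (fst_mul_fst_fderiv_eq_zero x symm)).resolve_left hgx

theorem isFManifoldMul2_twistMul_iff (hg : ContDiff ℝ (⊤ : ℕ∞) g) (hEg : E ⋆ g = hE) :
    IsFManifoldMul2 (twistMul g) E ↔ ∀ x, fderiv ℝ (fun y => (g y).1) x (0, 1) = 0 := by
  have hg' : Differentiable ℝ g := hg.differentiable (by simp)
  simp only [fun x => fderiv_fst_apply (hg' x)]
  exact ⟨fst_fderiv_eq_zero_of_isFManifoldMul2 hg' hEg, isFManifoldMul2_twistMul hg hEg⟩

theorem isFManifoldMul2_hMul : IsFManifoldMul2 hMul hE := by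
  have htwist : twistMul hE = hMul := funext₂ fun X Y => hMul_hE (X ⋆ Y)
  rw [← htwist, isFManifoldMul2_twistMul_iff (g := hE) contDiff_const (hMul_hE hE)]
  simp [hE]

theorem isEventualIdentity2_hMul_iff (smooth_E : ContDiff ℝ (⊤ : ℕ∞) E) :
    IsEventualIdentity2 hMul hE E ↔
      (∀ x, (E x).1 ≠ 0) ∧ ∀ x, fderiv ℝ (fun y => (E y).1) x (0, 1) = 0 := by
  have hfderiv {g : VF2} (hg : ContDiff ℝ (⊤ : ℕ∞) g) (hEg : E ⋆ g = hE) (x : ℝ × ℝ) :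
      fderiv ℝ (fun y => (E y).1) x (0, 1) = 0 ↔ fderiv ℝ (fun y => (g y).1) x (0, 1) = 0 :=
    fderiv_apply_eq_zero_iff_of_mul_eq_one (smooth_E.fst.differentiable (by simp) x)
      (hg.fst.differentiable (by simp) x) (fun y => fst_mul_fst_of_hMul_eq_hE y hEg) (0, 1)
  constructor
  · rintro ⟨g, hg, hEg, hF⟩
    exact ⟨fun x => left_ne_zero_of_mul_eq_one (fst_mul_fst_of_hMul_eq_hE x hEg),
      fun x => (hfderiv hg hEg x).2 ((isFManifoldMul2_twistMul_iff hg hEg).1 hF x)⟩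
  · rintro ⟨fst_ne_zero, fderiv_fst_eq_zero⟩
    have hg := contDiff_hInv smooth_E fst_ne_zero
    have hEg := hMul_hInv fst_ne_zero
    exact ⟨hInv E, hg, hEg, (isFManifoldMul2_twistMul_iff hg hEg).2
      fun x => (hfderiv hg hEg x).1 (fderiv_fst_eq_zero x)⟩

end EventualIdentity

/-- (a) The multiplication `∂/∂x¹ ∘ ∂/∂xⁱ = ∂/∂xⁱ`,
`∂/∂x² ∘ ∂/∂x² = 0` with identity `e = ∂/∂x¹` defines an F-manifold structure on `ℝ²`;
and (b) a vector field `E = f₁ ∂/∂x¹ + f₂ ∂/∂x²` (with `f₁, f₂` smooth) is an eventual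
identity if and only if `f₁` is nowhere vanishing and depends only on `x¹`
(`∂f₁/∂x² = 0`), `f₂` being an arbitrary smooth function. -/
theorem hertling_example_eventual_identities
    (f₁ f₂ : ℝ × ℝ → ℝ) (hf₁ : ContDiff ℝ (⊤ : ℕ∞) f₁) (hf₂ : ContDiff ℝ (⊤ : ℕ∞) f₂) :
    IsFManifoldMul2 hMul hE ∧
      (IsEventualIdentity2 hMul hE (fun x => (f₁ x, f₂ x)) ↔
        ((∀ x, f₁ x ≠ 0) ∧ ∀ x, fderiv ℝ f₁ x (0, 1) = 0)) :=
  ⟨isFManifoldMul2_hMul, isEventualIdentity2_hMul_iff (hf₁.prodMk hf₂)⟩
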